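/- Let K and H be finite-dimensional complex Hilbert spaces realized as ℂ^m and ℂ^n, and identify operators with matrices. Let τ be a positive-semidefinite m×m matrix with trace 1, let ψ0, ψ1 be orthonormal vectors in ℂ^n, and let U be a unitary (mn)×(mn) matrix. Define T(ρ) := U (τ ⊗ ρ) U* for n×n matrices ρ, where ⊗ is the Kronecker product. Let B be a Hermitian (mn)×(mn) matrix, and for j = 0, 1 set b_j := tr(T(|ψ_j⟩⟨ψ_j|) B) and σ_j² := tr(T(|ψ_j⟩⟨ψ_j|) B²) − b_j², with σ_j ≥ 0; suppose b0 ≠ b1. Then for all complex α0, α1 with |α0|² + |α1|² = 1, ψ := α0 ψ0 + α1 ψ1, and every Hermitian (mn)×(mn) matrix A satisfying ‖AB − BA‖ ≤ δ·‖A‖·‖B‖ (δ ≥ 0, ‖·‖ the ℓ²-operator norm), one has |tr(T(|ψ⟩⟨ψ|) A) − tr(T(|α0|² |ψ0⟩⟨ψ0| + |α1|² |ψ1⟩⟨ψ1|) A)| ≤ ((δ·‖B‖ + σ0 + σ1) / |b0 − b1|) · ‖A‖. -/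

import Mathlib

open Kronecker Matrix
open scoped ComplexOrder

/-- The ℓ²-operator norm of a square complex matrix. -/
noncomputable def l2OpNorm {k : Type*} [Fintype k] [DecidableEq k]
    (M : Matrix k k ℂ) : ℝ := ‖Matrix.toEuclideanCLM (𝕜 := ℂ) M‖

/-- Cauchy–Schwarz for the Hilbert–Schmidt inner product, with a bounded operator in between. -/
theorem norm_trace_conjTranspose_mul_mul_le {N K : Type*} [Fintype N] [DecidableEq N] [Fintype K]
    (M : Matrix N N ℂ) (P Q : Matrix N K ℂ) :
    ‖(Pᴴ * M * Q).trace‖ ≤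
      l2OpNorm M * (√(Pᴴ * P).trace.re * √(Qᴴ * Q).trace.re) := by
  have norm_col (Z : Matrix N K ℂ) :
      (Zᴴ * Z).trace.re = ∑ k, ‖WithLp.toLp 2 (Z.col k)‖ ^ 2 := by
    simp only [trace, diag_apply, mul_apply, conjTranspose_apply, Complex.re_sum,
      EuclideanSpace.norm_sq_eq, col_apply]
    refine Finset.sum_congr rfl fun k _ => Finset.sum_congr rfl fun i _ => ?_
    rw [Complex.star_def, mul_comm, Complex.mul_conj, Complex.ofReal_re, Complex.normSq_eq_norm_sq]
  have trace_eq : (Pᴴ * M * Q).trace = ∑ k, inner ℂ (WithLp.toLp 2 (P.col k))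
      (Matrix.toEuclideanCLM (𝕜 := ℂ) M (WithLp.toLp 2 (Q.col k))) := by
    rw [Matrix.mul_assoc]
    simp only [trace, diag_apply, toEuclideanCLM_toLp, EuclideanSpace.inner_eq_star_dotProduct]
    refine Finset.sum_congr rfl fun k _ => ?_
    rw [mul_apply, dotProduct_comm]
    rfl
  rw [trace_eq, norm_col, norm_col]
  calc _ ≤ ∑ k, l2OpNorm M * (‖WithLp.toLp 2 (P.col k)‖ * ‖WithLp.toLp 2 (Q.col k)‖) := by
        refine (norm_sum_le _ _).trans (Finset.sum_le_sum fun k _ => ?_)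
        refine (norm_inner_le_norm _ _).trans ?_
        rw [mul_left_comm]
        exact mul_le_mul_of_nonneg_left (ContinuousLinearMap.le_opNorm _ _) (norm_nonneg _)
    _ ≤ _ := by
        rw [← Finset.mul_sum]
        exact mul_le_mul_of_nonneg_left (Real.sum_mul_le_sqrt_mul_sqrt _ _ _) (norm_nonneg _)

/-- The Hilbert–Schmidt norm of `(B - b) R` is the standard deviation of `B` in the state `R Rᴴ`. -/
theorem sqrt_trace_sub_smul_mul {N K : Type*} [Fintype N] [DecidableEq N] [Fintype K]
    {B : Matrix N N ℂ} (hB : B.IsHermitian) {R : Matrix N K ℂ} {b σ : ℝ} (hσ : 0 ≤ σ)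
    (hR : (Rᴴ * R).trace = 1) (hb : (R * Rᴴ * B).trace = (b : ℂ))
    (hv : (R * Rᴴ * (B * B)).trace = ((σ ^ 2 + b ^ 2 : ℝ) : ℂ)) :
    √((B * R - (b : ℂ) • R)ᴴ * (B * R - (b : ℂ) • R)).trace.re = σ := by
  have hb' : (Rᴴ * (B * R)).trace = (b : ℂ) := by
    rw [← hb, ← Matrix.mul_assoc, trace_mul_comm, ← Matrix.mul_assoc]
  have hv' : (Rᴴ * (B * (B * R))).trace = ((σ ^ 2 + b ^ 2 : ℝ) : ℂ) := by
    rw [← hv, ← Matrix.mul_assoc B, ← Matrix.mul_assoc, trace_mul_comm, ← Matrix.mul_assoc]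
  have key : ((B * R - (b : ℂ) • R)ᴴ * (B * R - (b : ℂ) • R)).trace = ((σ ^ 2 : ℝ) : ℂ) := by
    simp only [conjTranspose_sub, conjTranspose_mul, conjTranspose_smul, hB.eq, Matrix.sub_mul,
      Matrix.mul_sub, Matrix.smul_mul, Matrix.mul_smul, trace_sub, trace_smul, Matrix.mul_assoc,
      hb', hv', hR, Complex.star_def, Complex.conj_ofReal, smul_eq_mul]
    push_cast
    ring
  rw [key, Complex.ofReal_re, Real.sqrt_sq hσ]

/-- The off-diagonal matrix element of `A` between the purified states `R0` and `R1` is controlled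
by the commutator of `A` and `B` and the standard deviations of `B`. -/
theorem abs_sub_mul_norm_trace_le {N K : Type*} [Fintype N] [DecidableEq N] [Fintype K]
    {A B : Matrix N N ℂ} (hB : B.IsHermitian) {R0 R1 : Matrix N K ℂ} {b0 b1 σ0 σ1 : ℝ}
    (hσ0 : 0 ≤ σ0) (hσ1 : 0 ≤ σ1)
    (hR0 : (R0ᴴ * R0).trace = 1) (hR1 : (R1ᴴ * R1).trace = 1)
    (hb0 : (R0 * R0ᴴ * B).trace = (b0 : ℂ)) (hb1 : (R1 * R1ᴴ * B).trace = (b1 : ℂ))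
    (hv0 : (R0 * R0ᴴ * (B * B)).trace = ((σ0 ^ 2 + b0 ^ 2 : ℝ) : ℂ))
    (hv1 : (R1 * R1ᴴ * (B * B)).trace = ((σ1 ^ 2 + b1 ^ 2 : ℝ) : ℂ)) :
    |b0 - b1| * ‖(R1ᴴ * A * R0).trace‖ ≤
      l2OpNorm (A * B - B * A) + (σ0 + σ1) * l2OpNorm A := by
  have hcomm := norm_trace_conjTranspose_mul_mul_le (A * B - B * A) R1 R0
  have hright := norm_trace_conjTranspose_mul_mul_le A R1 (B * R0 - (b0 : ℂ) • R0)
  have hleft := norm_trace_conjTranspose_mul_mul_le A (B * R1 - (b1 : ℂ) • R1) R0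
  rw [sqrt_trace_sub_smul_mul hB hσ0 hR0 hb0 hv0] at hright
  rw [sqrt_trace_sub_smul_mul hB hσ1 hR1 hb1 hv1] at hleft
  simp only [hR0, hR1, Complex.one_re, Real.sqrt_one, mul_one, one_mul] at hcomm hright hleft
  have split : ((b0 - b1 : ℝ) : ℂ) * (R1ᴴ * A * R0).trace =
      (R1ᴴ * (A * B - B * A) * R0).trace - (R1ᴴ * A * (B * R0 - (b0 : ℂ) • R0)).trace +
        ((B * R1 - (b1 : ℂ) • R1)ᴴ * A * R0).trace := by
    simp only [conjTranspose_sub, conjTranspose_mul, conjTranspose_smul, hB.eq, Matrix.sub_mul,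
      Matrix.mul_sub, Matrix.smul_mul, Matrix.mul_smul, trace_sub, trace_smul, Matrix.mul_assoc,
      Complex.star_def, Complex.conj_ofReal, smul_eq_mul]
    push_cast
    ring
  rw [← Real.norm_eq_abs, ← Complex.norm_real, ← norm_mul, split]
  refine (norm_add_le _ _).trans ?_
  have := norm_sub_le (R1ᴴ * (A * B - B * A) * R0).trace
    (R1ᴴ * A * (B * R0 - (b0 : ℂ) • R0)).trace
  linarith

/-- The off-diagonal terms in the expectation of a Hermitian matrix in a superposition. -/
theorem norm_trace_superposition_sub_mixture_le {N K : Type*} [Fintype N] [Fintype K]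
    {A : Matrix N N ℂ} (hA : A.IsHermitian) (R0 R1 : Matrix N K ℂ) {α0 α1 : ℂ}
    (hα : ‖α0‖ ^ 2 + ‖α1‖ ^ 2 = 1) :
    ‖((α0 • R0 + α1 • R1) * (α0 • R0 + α1 • R1)ᴴ * A).trace -
        (((‖α0‖ ^ 2 : ℝ) : ℂ) * (R0 * R0ᴴ * A).trace +
          ((‖α1‖ ^ 2 : ℝ) : ℂ) * (R1 * R1ᴴ * A).trace)‖ ≤ ‖(R1ᴴ * A * R0).trace‖ := by
  have h01 : (R0 * R1ᴴ * A).trace = (R1ᴴ * A * R0).trace := by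
    rw [Matrix.mul_assoc, trace_mul_comm]
  have h10 : (R1 * R0ᴴ * A).trace = star (R1ᴴ * A * R0).trace := by
    rw [← trace_conjTranspose, Matrix.mul_assoc, trace_mul_comm]
    simp [hA.eq, Matrix.mul_assoc]
  have hsq (z : ℂ) : ((‖z‖ ^ 2 : ℝ) : ℂ) = z * star z := by
    rw [Complex.star_def, Complex.mul_conj, Complex.normSq_eq_norm_sq]
  have expand : ((α0 • R0 + α1 • R1) * (α0 • R0 + α1 • R1)ᴴ * A).trace -
        (((‖α0‖ ^ 2 : ℝ) : ℂ) * (R0 * R0ᴴ * A).trace +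
          ((‖α1‖ ^ 2 : ℝ) : ℂ) * (R1 * R1ᴴ * A).trace) =
      α0 * star α1 * (R1ᴴ * A * R0).trace + α1 * star α0 * star (R1ᴴ * A * R0).trace := by
    rw [← h10, ← h01, hsq, hsq]
    simp only [conjTranspose_add, conjTranspose_smul, Matrix.add_mul, Matrix.mul_add,
      Matrix.smul_mul, Matrix.mul_smul, trace_add, trace_smul, smul_eq_mul]
    ring
  rw [expand]
  refine (norm_add_le _ _).trans ?_
  simp only [norm_mul, norm_star]
  nlinarith [sq_nonneg (‖α0‖ - ‖α1‖), norm_nonneg (R1ᴴ * A * R0).trace]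

open scoped MatrixOrder in
theorem exists_eq_mul_conjTranspose_self {N : Type*} [Fintype N] {τ : Matrix N N ℂ}
    (hτ : τ.PosSemidef) : ∃ S : Matrix N N ℂ, τ = S * Sᴴ := by
  classical
  obtain ⟨C, hC⟩ := CStarAlgebra.nonneg_iff_eq_star_mul_self.mp hτ.nonneg
  exact ⟨Cᴴ, by rw [hC, conjTranspose_conjTranspose, star_eq_conjTranspose]⟩

theorem stmt8 {m n : ℕ}
    (τ : Matrix (Fin m) (Fin m) ℂ) (hτpos : τ.PosSemidef) (hτtr : τ.trace = 1)
    (ψ0 ψ1 : Fin n → ℂ)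
    (hψ00 : star ψ0 ⬝ᵥ ψ0 = 1) (hψ11 : star ψ1 ⬝ᵥ ψ1 = 1) (hψ01 : star ψ0 ⬝ᵥ ψ1 = 0)
    (U : Matrix (Fin m × Fin n) (Fin m × Fin n) ℂ)
    (hU : U ∈ Matrix.unitaryGroup (Fin m × Fin n) ℂ)
    (B : Matrix (Fin m × Fin n) (Fin m × Fin n) ℂ) (hB : B.IsHermitian)
    (b0 b1 σ0 σ1 : ℝ) (hσ0 : 0 ≤ σ0) (hσ1 : 0 ≤ σ1)
    (hb0 : (U * (τ ⊗ₖ vecMulVec ψ0 (star ψ0)) * Uᴴ * B).trace = (b0 : ℂ))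
    (hb1 : (U * (τ ⊗ₖ vecMulVec ψ1 (star ψ1)) * Uᴴ * B).trace = (b1 : ℂ))
    (hv0 : (U * (τ ⊗ₖ vecMulVec ψ0 (star ψ0)) * Uᴴ * (B * B)).trace =
      ((σ0 ^ 2 + b0 ^ 2 : ℝ) : ℂ))
    (hv1 : (U * (τ ⊗ₖ vecMulVec ψ1 (star ψ1)) * Uᴴ * (B * B)).trace =
      ((σ1 ^ 2 + b1 ^ 2 : ℝ) : ℂ))
    (hb : b0 ≠ b1)
    (α0 α1 : ℂ) (hα : ‖α0‖ ^ 2 + ‖α1‖ ^ 2 = 1)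
    (A : Matrix (Fin m × Fin n) (Fin m × Fin n) ℂ) (hA : A.IsHermitian)
    (δ : ℝ) (hδ : 0 ≤ δ) (hcomm : l2OpNorm (A * B - B * A) ≤ δ * l2OpNorm A * l2OpNorm B) :
    ‖(U * (τ ⊗ₖ vecMulVec (α0 • ψ0 + α1 • ψ1) (star (α0 • ψ0 + α1 • ψ1))) * Uᴴ * A).trace -
        (U * (τ ⊗ₖ (((‖α0‖ ^ 2 : ℝ) : ℂ) • vecMulVec ψ0 (star ψ0) +
          ((‖α1‖ ^ 2 : ℝ) : ℂ) • vecMulVec ψ1 (star ψ1))) * Uᴴ * A).trace‖ ≤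
      ((δ * l2OpNorm B + σ0 + σ1) / |b0 - b1|) * l2OpNorm A := by
  obtain ⟨S, hS⟩ := exists_eq_mul_conjTranspose_self hτpos
  let R (ψ : Fin n → ℂ) : Matrix (Fin m × Fin n) (Fin m × Unit) ℂ := U * (S ⊗ₖ replicateCol Unit ψ)
  have hR (ψ : Fin n → ℂ) : U * (τ ⊗ₖ vecMulVec ψ (star ψ)) * Uᴴ = R ψ * (R ψ)ᴴ := by
    simp only [R, conjTranspose_mul, conjTranspose_kronecker, conjTranspose_replicateCol, hS,
      vecMulVec_eq Unit, mul_kronecker_mul, Matrix.mul_assoc]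
  have hUU : Uᴴ * U = 1 := mem_unitaryGroup_iff'.1 hU
  have hR_norm (ψ : Fin n → ℂ) (hψ : star ψ ⬝ᵥ ψ = 1) : ((R ψ)ᴴ * R ψ).trace = 1 := by
    rw [trace_mul_comm, ← hR, trace_mul_comm, ← Matrix.mul_assoc, hUU,
      Matrix.one_mul, trace_kronecker, hτtr, trace_vecMulVec, dotProduct_comm, hψ, one_mul]
  have hR_add : R (α0 • ψ0 + α1 • ψ1) = α0 • R ψ0 + α1 • R ψ1 := by
    simp only [R, replicateCol_add, replicateCol_smul, kronecker_add, kronecker_smul,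
      Matrix.mul_add, Matrix.mul_smul]
  rw [hR] at hb0 hb1 hv0 hv1
  have hoff := abs_sub_mul_norm_trace_le (A := A) hB hσ0 hσ1 (hR_norm ψ0 hψ00) (hR_norm ψ1 hψ11)
    hb0 hb1 hv0 hv1
  have hdiff := norm_trace_superposition_sub_mixture_le hA (R ψ0) (R ψ1) hα
  simp only [kronecker_add, kronecker_smul, Matrix.mul_add, Matrix.add_mul, Matrix.mul_smul,
    Matrix.smul_mul, trace_add, trace_smul, smul_eq_mul, hR, hR_add] at hdiff ⊢
  refine hdiff.trans ?_
  rw [div_mul_eq_mul_div, le_div_iff₀ (abs_pos.2 (sub_ne_zero.2 hb)), mul_comm]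
  linarith
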